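/- arXiv:math/0609163 — 2 statements merged into one kernel-verified Lean document; each statement's English description precedes it below -/
import Mathlib

section
/- Let 0 < α0 < α1, σ0, σ1 > 0, p ∈ (0,1), and let F(x) = p(1 − (x/σ0)^{−α0})1_{x≥σ0} + (1−p)(1 − (x/σ1)^{−α1})1_{x≥σ1} be the Pareto mixture c.d.f. Write F(x) = exp(−σ^{α0}(x) x^{−α0}) with σ^{α0}(x) = −x^{α0} ln F(x) for x > min(σ0,σ1). Then σ^{α0}(x) − p σ0^{α0} ∼ C0 x^{−β} as x → ∞, where β = min{α0, α1 − α0} and C0 = σ1^{α1}(1−p) if α1 − α0 < α0, C0 = σ1^{α1}(1−p) + p²σ0^{2α0}/2 if α1 − α0 = α0, and C0 = p²σ0^{2α0}/2 if α1 − α0 > α0. -/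
open Filter Real Topology

/-!
Far out, `F x = 1 - u x` with `u x = a x ^ (-α0) + b x ^ (-α1)`, where `a = p σ0 ^ α0` and
`b = (1 - p) σ1 ^ α1`. Since `-log (1 - u) = u + u ^ 2 / 2 + o(u ^ 2)`, the scale satisfies
`-x ^ α0 log (F x) - a = b x ^ (-(α1 - α0)) + (a ^ 2 / 2) x ^ (-α0) + (smaller terms)`, and the
slower decaying of the two powers gives the rate; both contribute when the exponents agree.
-/

open Asymptotics

theorem isBigO_sum_range_add_log_one_sub (n : ℕ) :
    (fun u : ℝ => (∑ i ∈ Finset.range n, u ^ (i + 1) / (i + 1)) + log (1 - u)) =O[𝓝 0]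
      fun u => u ^ (n + 1) := by
  have half_bound : ∀ᶠ u : ℝ in 𝓝 0, |u| < 1 / 2 :=
    continuous_abs.tendsto' 0 0 abs_zero |>.eventually_lt_const (by norm_num)
  refine .of_bound 2 ?_
  filter_upwards [half_bound] with u hu
  calc ‖(∑ i ∈ Finset.range n, u ^ (i + 1) / (i + 1)) + log (1 - u)‖
      ≤ |u| ^ (n + 1) / (1 - |u|) := abs_log_sub_add_sum_range_le (by linarith) n
    _ ≤ |u| ^ (n + 1) / (1 / 2) := by gcongr; linarith
    _ = 2 * ‖u ^ (n + 1)‖ := by rw [norm_pow, norm_eq_abs]; ring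

theorem isLittleO_neg_log_one_sub_sub_sub_sq :
    (fun u : ℝ => -log (1 - u) - u - u ^ 2 / 2) =o[𝓝 0] fun u => u ^ 2 := by
  have taylor := (isBigO_sum_range_add_log_one_sub 2).neg_left
  refine (taylor.congr_left fun u => ?_).trans_isLittleO (isLittleO_pow_pow (by norm_num))
  simp only [Finset.sum_range_succ, Finset.sum_range_zero]
  push_cast
  ring

theorem tendsto_mul_neg_log_one_sub_sub {ι : Type*} {l : Filter ι} {u w : ι → ℝ} {L : ℝ}
    (hu : Tendsto u l (𝓝 0)) (hw : Tendsto (fun i => w i * u i ^ 2) l (𝓝 L)) :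
    Tendsto (fun i => w i * (-log (1 - u i) - u i)) l (𝓝 (L / 2)) := by
  have remainder : Tendsto (fun i => w i * (-log (1 - u i) - u i - u i ^ 2 / 2)) l (𝓝 0) :=
    (isLittleO_one_iff ℝ).1 <|
      ((isBigO_refl w l).mul_isLittleO
        (isLittleO_neg_log_one_sub_sub_sub_sq.comp_tendsto hu)).trans_isBigO (hw.isBigO_one ℝ)
  simpa using (remainder.add (hw.div_const 2)).congr fun i => by ring

theorem tendsto_rpow_mul_rpow_neg_of_lt {γ c : ℝ} (h : γ < c) :
    Tendsto (fun x : ℝ => x ^ γ * x ^ (-c)) atTop (𝓝 0) := by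
  refine (tendsto_rpow_neg_atTop (sub_pos.2 h)).congr' ?_
  filter_upwards [eventually_gt_atTop 0] with x hx
  rw [← rpow_add hx]
  ring_nf

theorem tendsto_rpow_mul_rpow_neg_of_le {γ c : ℝ} (h : γ ≤ c) :
    Tendsto (fun x : ℝ => x ^ γ * x ^ (-c)) atTop (𝓝 (if γ = c then 1 else 0)) := by
  split_ifs with hγ
  · refine tendsto_const_nhds.congr' ?_
    filter_upwards [eventually_gt_atTop 0] with x hx
    rw [← rpow_add hx, hγ, add_neg_cancel, rpow_zero]
  · exact tendsto_rpow_mul_rpow_neg_of_lt (h.lt_of_ne hγ)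

theorem tendsto_rpow_mul_sq_add_rpow_neg (a b : ℝ) {α0 α1 γ : ℝ} (h0 : γ ≤ 2 * α0)
    (h1 : γ < 2 * α1) :
    Tendsto (fun x : ℝ => x ^ γ * (a * x ^ (-α0) + b * x ^ (-α1)) ^ 2) atTop
      (𝓝 (if γ = 2 * α0 then a ^ 2 else 0)) := by
  have h01 : γ < α0 + α1 := by linarith
  have expansion := (((tendsto_rpow_mul_rpow_neg_of_le h0).const_mul (a ^ 2)).add
    ((tendsto_rpow_mul_rpow_neg_of_lt h01).const_mul (2 * a * b))).add
    ((tendsto_rpow_mul_rpow_neg_of_lt h1).const_mul (b ^ 2))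
  simp only [mul_zero, add_zero, mul_ite, mul_one] at expansion
  refine expansion.congr' ?_
  filter_upwards [eventually_gt_atTop 0] with x hx
  have cross : x ^ (-(α0 + α1)) = x ^ (-α0) * x ^ (-α1) := by rw [neg_add, rpow_add hx]
  have square (α : ℝ) : x ^ (-(2 * α)) = (x ^ (-α)) ^ 2 := by
    rw [two_mul, neg_add, rpow_add hx, sq]
  rw [cross, square, square]
  ring

theorem tendsto_rpow_mul_neg_log_one_sub_add_rpow_neg (a b : ℝ) {α0 α1 γ : ℝ} (hα0 : 0 < α0)
    (hα1 : 0 < α1) (h0 : γ ≤ 2 * α0) (h1 : γ ≤ α1) :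
    Tendsto
      (fun x : ℝ => x ^ γ * (-log (1 - (a * x ^ (-α0) + b * x ^ (-α1))) - a * x ^ (-α0))) atTop
      (𝓝 ((if γ = α1 then b else 0) + if γ = 2 * α0 then a ^ 2 / 2 else 0)) := by
  have tail_zero : Tendsto (fun x : ℝ => a * x ^ (-α0) + b * x ^ (-α1)) atTop (𝓝 0) := by
    simpa using ((tendsto_rpow_neg_atTop hα0).const_mul a).add
      ((tendsto_rpow_neg_atTop hα1).const_mul b)
  have linear := (tendsto_rpow_mul_rpow_neg_of_le h1).const_mul b
  have quadratic := tendsto_mul_neg_log_one_sub_sub tail_zero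
    (tendsto_rpow_mul_sq_add_rpow_neg a b h0 (by linarith))
  simp only [mul_ite, mul_one, mul_zero] at linear
  simp only [ite_div, zero_div] at quadratic
  exact (linear.add quadratic).congr fun x => by ring

/-- The function `σ^α` of the tail representation `F x = exp (-σ^α(x) * x ^ (-α))`, used to measure
how far `F` is from a pure power tail. Where `F` vanishes it is `0` and not `∞`, so it is meaningful
only where `F` is positive. -/
noncomputable def tailScale (α : ℝ) (F : ℝ → ℝ) (x : ℝ) : ℝ :=
  -(x ^ α) * log (F x)

theorem tendsto_rpow_mul_tailScale_sub {a b α0 α1 β : ℝ} {F : ℝ → ℝ} (hα0 : 0 < α0)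
    (hα1 : 0 < α1) (h0 : β ≤ α0) (h1 : β ≤ α1 - α0)
    (hF : F =ᶠ[atTop] fun x => 1 - (a * x ^ (-α0) + b * x ^ (-α1))) :
    Tendsto (fun x => x ^ β * (tailScale α0 F x - a)) atTop
      (𝓝 ((if β = α1 - α0 then b else 0) + if β = α0 then a ^ 2 / 2 else 0)) := by
  have shifted := tendsto_rpow_mul_neg_log_one_sub_add_rpow_neg a b (γ := β + α0) hα0 hα1
    (by linarith) (by linarith)
  simp only [← eq_sub_iff_add_eq, two_mul, add_sub_cancel_right] at shifted
  refine shifted.congr' ?_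
  filter_upwards [hF, eventually_gt_atTop 0] with x hFx hx
  have cancel : x ^ α0 * x ^ (-α0) = 1 := by rw [← rpow_add hx, add_neg_cancel, rpow_zero]
  rw [tailScale, hFx, rpow_add hx]
  linear_combination (-x ^ β * a) * cancel

theorem div_rpow_neg_eq_mul {x σ : ℝ} (hx : 0 ≤ x) (hσ : 0 ≤ σ) (α : ℝ) :
    (x / σ) ^ (-α) = σ ^ α * x ^ (-α) := by
  rw [div_rpow hx hσ, rpow_neg hσ, div_inv_eq_mul, mul_comm]

/-- The mixture, with weights `p` and `1 - p`, of the Pareto distribution functions with tail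
indices `α0`, `α1` and scales `σ0`, `σ1`. The weight `p` may be any real number, so that signed
mixtures are included. -/
noncomputable def paretoMixture (α0 α1 σ0 σ1 p x : ℝ) : ℝ :=
  (if σ0 ≤ x then p * (1 - (x / σ0) ^ (-α0)) else 0) +
    (if σ1 ≤ x then (1 - p) * (1 - (x / σ1) ^ (-α1)) else 0)

theorem paretoMixture_eventuallyEq (α0 α1 p : ℝ) {σ0 σ1 : ℝ} (hσ0 : 0 ≤ σ0) (hσ1 : 0 ≤ σ1) :
    paretoMixture α0 α1 σ0 σ1 p =ᶠ[atTop]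
      fun x => 1 - (p * σ0 ^ α0 * x ^ (-α0) + σ1 ^ α1 * (1 - p) * x ^ (-α1)) := by
  filter_upwards [eventually_ge_atTop σ0, eventually_ge_atTop σ1] with x h0 h1
  have hx : 0 ≤ x := hσ0.trans h0
  rw [paretoMixture, if_pos h0, if_pos h1, div_rpow_neg_eq_mul hx hσ0,
    div_rpow_neg_eq_mul hx hσ1]
  ring

theorem ite_min_eq_right_add_ite_min_eq_left {T M : Type*} [LinearOrder T] [AddZeroClass M]
    (s t : T) (b c : M) :
    ((if min s t = t then b else 0) + if min s t = s then c else 0) =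
      if t < s then b else if t = s then b + c else c := by
  rcases lt_trichotomy t s with h | rfl | h
  · rw [min_eq_right h.le, if_pos rfl, if_neg h.ne, if_pos h, add_zero]
  · rw [min_self, if_pos rfl, if_pos rfl, if_neg (lt_irrefl t), if_pos rfl]
  · rw [min_eq_left h.le, if_neg h.ne, if_pos rfl, if_neg h.not_gt, if_neg h.ne', zero_add]

theorem pareto_mixture_exact_rate_general {α0 α1 σ0 σ1 : ℝ} (p : ℝ) (hα0 : 0 < α0)
    (hα1 : 0 < α1) (hσ0 : 0 < σ0) (hσ1 : 0 < σ1) :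
    Tendsto
      (fun x => x ^ min α0 (α1 - α0) *
        (tailScale α0 (paretoMixture α0 α1 σ0 σ1 p) x - p * σ0 ^ α0))
      atTop
      (𝓝 (if α1 - α0 < α0 then σ1 ^ α1 * (1 - p)
        else if α1 - α0 = α0 then σ1 ^ α1 * (1 - p) + p ^ 2 * σ0 ^ (2 * α0) / 2
        else p ^ 2 * σ0 ^ (2 * α0) / 2)) := by
  have leading_sq : p ^ 2 * σ0 ^ (2 * α0) = (p * σ0 ^ α0) ^ 2 := by
    rw [mul_pow, two_mul, rpow_add hσ0, sq (σ0 ^ α0)]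
  rw [leading_sq, ← ite_min_eq_right_add_ite_min_eq_left]
  exact tendsto_rpow_mul_tailScale_sub hα0 hα1 (min_le_left _ _) (min_le_right _ _)
    (paretoMixture_eventuallyEq α0 α1 p hσ0.le hσ1.le)

/-- **Example (Mixtures of Pareto laws)**: for the Pareto-mixture c.d.f.
`F(x) = p(1-(x/σ0)^{-α0})1_{x≥σ0} + (1-p)(1-(x/σ1)^{-α1})1_{x≥σ1}` with `0 < α0 < α1`,
the tail representation `σ^{α0}(x) = -x^{α0} ln F(x)` satisfies
`σ^{α0}(x) - p σ0^{α0} ∼ C0 x^{-β}` as `x → ∞`, where `β = min{α0, α1-α0}` and `C0` is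
the indicated case-dependent constant. -/
theorem pareto_mixture_exact_rate (α0 α1 σ0 σ1 p β C0 : ℝ)
    (hα0 : 0 < α0) (hα01 : α0 < α1) (hσ0 : 0 < σ0) (hσ1 : 0 < σ1)
    (hp : p ∈ Set.Ioo (0 : ℝ) 1)
    (F : ℝ → ℝ)
    (hF : ∀ x : ℝ, F x =
        (if σ0 ≤ x then p * (1 - (x / σ0) ^ (-α0)) else 0) +
          (if σ1 ≤ x then (1 - p) * (1 - (x / σ1) ^ (-α1)) else 0))
    (hβ : β = min α0 (α1 - α0))
    (hC0 : C0 = if α1 - α0 < α0 then σ1 ^ α1 * (1 - p)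
        else if α1 - α0 = α0 then σ1 ^ α1 * (1 - p) + p ^ 2 * σ0 ^ (2 * α0) / 2
        else p ^ 2 * σ0 ^ (2 * α0) / 2) :
    Tendsto (fun x : ℝ => x ^ β * ((-(x ^ α0) * Real.log (F x)) - p * σ0 ^ α0))
      atTop (𝓝 C0) := by
  rw [hβ, hC0, funext hF]
  exact pareto_mixture_exact_rate_general p hα0 (hα0.trans hα01) hσ0 hσ1
end

section
/- Let F(x) = exp(−σ^α(x) x^{−α}), x > 0, with σ(x) → σ0 > 0, satisfy Condition 1 with constants β, C1 > 0, let F_n(x) = exp(−σ^α(n^{1/α} x) x^{−α}) and G(x) = exp(−σ0^α x^{−α}). Then for any constant c ∈ (0, σ0^α) and any sequence ε(n) → 0 with n^{1/α} ε(n) → ∞, there is n0 such that for all n ≥ n0 and all x ∈ (ε(n), ∞): |F_n(x) − G(x)| ≤ C1 n^{−β/α} x^{−(α+β)} e^{−c x^{−α}}. -/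
open Filter Real Topology

/-!
Write `F y = exp (-s(y) y^{-α})`, where `s = σ^α` in the notation of the paper. Rescaling turns
`F (n^{1/α} x) ^ n` into `exp (-s(n^{1/α} x) x^{-α})`, so `F_n(x)` and `G(x)` are two values of
`u ↦ exp (-u x^{-α})`. Since `s(y) → σ0^α > c`, both are taken at points `u ≥ c` once `n^{1/α} x` is
large, and there the derivative of this map is at most `x^{-α} e^{-c x^{-α}}` in absolute value.
Condition 1 at `n^{1/α} x` bounds the distance between the two points. The divergence of
`n^{1/α} ε(n)` makes `n^{1/α} x` large uniformly in `x > ε(n)`.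
-/

section Filters

lemma eventually_forall_gt_mul_of_tendsto {ι R : Type*} [Mul R] [Zero R] [Preorder R]
    [PosMulMono R] {L : Filter ι} {r ε : ι → R} {p : R → Prop}
    (hr : ∀ᶠ i in L, 0 ≤ r i) (hrε : Tendsto (fun i ↦ r i * ε i) L atTop)
    (hp : ∀ᶠ y in atTop, p y) :
    ∀ᶠ i in L, ∀ x, ε i < x → p (r i * x) := by
  filter_upwards [hr, hrε.eventually (eventually_forall_ge_atTop.2 hp)] with i hi hpi x hx
  exact hpi _ (mul_le_mul_of_nonneg_left hx.le hi)

lemma tendsto_of_eventually_abs_sub_le_rpow_neg {f : ℝ → ℝ} {l β C : ℝ} (hβ : 0 < β)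
    (hf : ∀ᶠ x in atTop, |f x - l| ≤ C * x ^ (-β)) : Tendsto f atTop (𝓝 l) := by
  have hrate : Tendsto (fun x : ℝ ↦ C * x ^ (-β)) atTop (𝓝 0) := by
    simpa using (tendsto_rpow_neg_atTop hβ).const_mul C
  exact tendsto_iff_norm_sub_tendsto_zero.2 <|
    squeeze_zero' (.of_forall fun _ ↦ norm_nonneg _) hf hrate

end Filters

section ExpAndRpow

lemma abs_exp_sub_exp_le {a b m : ℝ} (ha : a ≤ m) (hb : b ≤ m) :
    |exp a - exp b| ≤ exp m * |a - b| :=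
  (convex_Iic m).norm_image_sub_le_of_norm_hasDerivWithin_le
    (fun y _ ↦ (hasDerivAt_exp y).hasDerivWithinAt)
    (fun y hy ↦ by simpa only [norm_eq_abs, abs_exp] using exp_le_exp.2 hy) hb ha

lemma abs_exp_neg_mul_sub_exp_neg_mul_le {u v c t : ℝ} (hu : c ≤ u) (hv : c ≤ v) (ht : 0 ≤ t) :
    |exp (-(u * t)) - exp (-(v * t))| ≤ |u - v| * (t * exp (-(c * t))) :=
  calc |exp (-(u * t)) - exp (-(v * t))|
      ≤ exp (-(c * t)) * |-(u * t) - -(v * t)| :=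
        abs_exp_sub_exp_le (neg_le_neg (mul_le_mul_of_nonneg_right hu ht))
          (neg_le_neg (mul_le_mul_of_nonneg_right hv ht))
    _ = exp (-(c * t)) * (|u - v| * t) := by
        rw [neg_sub_neg, ← sub_mul, abs_mul, abs_of_nonneg ht, abs_sub_comm]
    _ = |u - v| * (t * exp (-(c * t))) := by ring

lemma rpow_one_div_mul_rpow {t x : ℝ} (ht : 0 ≤ t) (hx : 0 ≤ x) (α p : ℝ) :
    (t ^ (1 / α) * x) ^ p = t ^ (p / α) * x ^ p := by
  rw [mul_rpow (rpow_nonneg ht _) hx, ← rpow_mul ht, one_div_mul_eq_div]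

end ExpAndRpow

section FrechetScale

/-- The `α`-th power of the scale function in the representation `F x = exp (-σ^α(x) x^{-α})` of a
distribution function `F`, that is, the paper's `σ^α(x)`. It is defined by solving for `σ^α(x)`,
hence meaningful only where `0 < x` and `0 < F x`. -/
noncomputable def frechetScale (α : ℝ) (F : ℝ → ℝ) (x : ℝ) : ℝ :=
  -(x ^ α) * log (F x)

variable {α c l x : ℝ} {F : ℝ → ℝ} {n : ℕ}

lemma exp_neg_frechetScale_mul_rpow_neg (hx : 0 < x) (hF : 0 < F x) :
    exp (-(frechetScale α F x * x ^ (-α))) = F x := by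
  have hcancel : x ^ α * x ^ (-α) = 1 := by rw [← rpow_add hx, add_neg_cancel, rpow_zero]
  have hlog : -(frechetScale α F x * x ^ (-α)) = log (F x) := by
    rw [frechetScale]
    linear_combination log (F x) * hcancel
  rw [hlog, exp_log hF]

lemma pow_eq_exp_neg_frechetScale (hα : α ≠ 0) (hn : n ≠ 0) (hx : 0 < x)
    (hF : 0 < F ((n : ℝ) ^ (1 / α) * x)) :
    F ((n : ℝ) ^ (1 / α) * x) ^ n =
      exp (-(frechetScale α F ((n : ℝ) ^ (1 / α) * x) * x ^ (-α))) := by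
  have hn' : (n : ℝ) ≠ 0 := Nat.cast_ne_zero.2 hn
  have hy : 0 < (n : ℝ) ^ (1 / α) * x := by positivity
  have hscale : n * ((n : ℝ) ^ (1 / α) * x) ^ (-α) = x ^ (-α) := by
    rw [rpow_one_div_mul_rpow n.cast_nonneg hx.le, neg_div, div_self hα, rpow_neg_one,
      mul_inv_cancel_left₀ hn']
  rw [← hscale, mul_left_comm, ← mul_neg, exp_nat_mul, exp_neg_frechetScale_mul_rpow_neg hy hF]

lemma abs_pow_sub_exp_le (hα : α ≠ 0) (hn : n ≠ 0) (hx : 0 < x)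
    (hF : 0 < F ((n : ℝ) ^ (1 / α) * x)) (hc : c ≤ frechetScale α F ((n : ℝ) ^ (1 / α) * x))
    (hcl : c ≤ l) :
    |F ((n : ℝ) ^ (1 / α) * x) ^ n - exp (-(l * x ^ (-α)))| ≤
      |frechetScale α F ((n : ℝ) ^ (1 / α) * x) - l| * (x ^ (-α) * exp (-(c * x ^ (-α)))) := by
  rw [pow_eq_exp_neg_frechetScale hα hn hx hF]
  exact abs_exp_neg_mul_sub_exp_neg_mul_le hc hcl (rpow_nonneg hx.le _)

end FrechetScale

theorem Fn_minus_G_bound_general {α β c l C : ℝ} {F : ℝ → ℝ} {ε : ℕ → ℝ}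
    (hα : α ≠ 0) (hβ : 0 < β)
    (hF : ∀ᶠ x in atTop, 0 < F x ∧ |frechetScale α F x - l| ≤ C * x ^ (-β))
    (hc : c < l) (hε : Tendsto (fun n : ℕ ↦ (n : ℝ) ^ (1 / α) * ε n) atTop atTop) :
    ∀ᶠ n : ℕ in atTop, ∀ x, ε n < x →
      |F ((n : ℝ) ^ (1 / α) * x) ^ n - exp (-(l * x ^ (-α)))| ≤
        C * (n : ℝ) ^ (-(β / α)) * (x ^ (-(α + β)) * exp (-(c * x ^ (-α)))) := by
  have hlim : Tendsto (frechetScale α F) atTop (𝓝 l) :=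
    tendsto_of_eventually_abs_sub_le_rpow_neg hβ (hF.mono fun _ h ↦ h.2)
  have hr (n : ℕ) : 0 ≤ (n : ℝ) ^ (1 / α) := rpow_nonneg n.cast_nonneg _
  have hlarge := hF.and ((hlim.eventually_const_le hc).and (eventually_gt_atTop 0))
  filter_upwards [eventually_forall_gt_mul_of_tendsto (.of_forall hr) hε hlarge,
    eventually_ne_atTop 0] with n hn hn0 x hεx
  obtain ⟨⟨hFy, hrate⟩, hcy, hy⟩ := hn x hεx
  have hx : 0 < x := pos_of_mul_pos_right hy (hr n)
  calc |F ((n : ℝ) ^ (1 / α) * x) ^ n - exp (-(l * x ^ (-α)))|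
      ≤ |frechetScale α F ((n : ℝ) ^ (1 / α) * x) - l| * (x ^ (-α) * exp (-(c * x ^ (-α)))) :=
        abs_pow_sub_exp_le hα hn0 hx hFy hcy hc.le
    _ ≤ C * ((n : ℝ) ^ (1 / α) * x) ^ (-β) * (x ^ (-α) * exp (-(c * x ^ (-α)))) := by gcongr
    _ = C * (n : ℝ) ^ (-(β / α)) * (x ^ (-(α + β)) * exp (-(c * x ^ (-α)))) := by
        rw [rpow_one_div_mul_rpow n.cast_nonneg hx.le, neg_div, neg_add, rpow_add hx]
        ring

/-- **Uniform closeness of `F_n` to the Fréchet c.d.f. `G` away from the origin**: under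
Condition 1, for any `c ∈ (0, σ0^α)` and any sequence `ε(n) → 0` with `n^{1/α} ε(n) → ∞`,
for all sufficiently large `n` and all `x > ε(n)`:
`|F_n(x) - G(x)| ≤ C1 n^{-β/α} x^{-(α+β)} e^{-c x^{-α}}`. -/
theorem Fn_minus_G_bound (α σ0 β C1 : ℝ)
    (hα : 0 < α) (hσ0 : 0 < σ0) (hβ : 0 < β) (hC1 : 0 < C1)
    (F : ℝ → ℝ) (hF0 : ∀ x, 0 ≤ F x) (hF1 : ∀ x, F x ≤ 1)
    -- Condition 1 for the tail representation σ^α(x) = -x^α ln F(x)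
    (hcond1 : ∀ᶠ x : ℝ in atTop,
        0 < F x ∧ |(-(x ^ α) * Real.log (F x)) - σ0 ^ α| ≤ C1 * x ^ (-β))
    (c : ℝ) (hc : c ∈ Set.Ioo 0 (σ0 ^ α))
    (ε : ℕ → ℝ) (hε : Tendsto ε atTop (𝓝 0))
    (hε' : Tendsto (fun n : ℕ => (n : ℝ) ^ ((1 : ℝ) / α) * ε n) atTop atTop) :
    ∀ᶠ n : ℕ in atTop, ∀ x : ℝ, ε n < x →
      |(F ((n : ℝ) ^ ((1 : ℝ) / α) * x)) ^ n - Real.exp (-(σ0 ^ α * x ^ (-α)))| ≤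
        C1 * (n : ℝ) ^ (-(β / α)) * (x ^ (-(α + β)) * Real.exp (-(c * x ^ (-α)))) :=
  Fn_minus_G_bound_general hα.ne' hβ hcond1 hc.2 hε'
end
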